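/- Let E be a lattice effect algebra and define x·y := ((x'∧y)⊕y')' for all x,y ∈ E. Then for all a, b, c ∈ E: if a'·b' = 0 and (a·b)'·c' = 0, then b'·c' = 0, a'·(b·c)' = 0 and (a·b)·c = a·(b·c) (i.e., the condition (NG8) holds in (E;·,',0,1)). -/

import Mathlib

/-- An effect algebra: a partial algebra (E;⊕,',0,1). The partial operation ⊕ is
modeled by a definedness predicate `D` together with a total function `add` whose
value is only meaningful on defined pairs. -/
structure EffectAlgebra (E : Type*) where
  /-- definedness of `x ⊕ y` -/
  D : E → E → Prop
  /-- the value of `x ⊕ y` (meaningful only when `D x y`) -/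
  add : E → E → E
  zero : E
  one : E
  /-- the complement `x'` -/
  compl : E → E
  /-- (E1) commutativity -/
  E1 : ∀ x y, D x y → D y x ∧ add x y = add y x
  /-- (E2) associativity -/
  E2 : ∀ x y z, D x y → D (add x y) z →
    D y z ∧ D x (add y z) ∧ add (add x y) z = add x (add y z)
  /-- (E3) existence of the complement -/
  E3a : ∀ x, D x (compl x)
  E3b : ∀ x, add x (compl x) = one
  /-- (E3) uniqueness of the complement -/
  E3c : ∀ x y, D x y → add x y = one → y = compl x
  /-- (E4) -/
  E4 : ∀ x, D x one → x = zero

/-- The induced order of an effect algebra: `a ≤ b` iff `a ⊕ c = b` for some `c`. -/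
def EffectAlgebra.le {E : Type*} (A : EffectAlgebra E) (a b : E) : Prop :=
  ∃ c, A.D a c ∧ A.add a c = b

/-- A lattice effect algebra: an effect algebra whose induced order is a lattice,
with meet `inf` and join `sup`. -/
structure LatticeEffectAlgebra (E : Type*) extends EffectAlgebra E where
  inf : E → E → E
  sup : E → E → E
  inf_le_left : ∀ a b, toEffectAlgebra.le (inf a b) a
  inf_le_right : ∀ a b, toEffectAlgebra.le (inf a b) b
  le_inf : ∀ a b c, toEffectAlgebra.le c a → toEffectAlgebra.le c b →
    toEffectAlgebra.le c (inf a b)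
  le_sup_left : ∀ a b, toEffectAlgebra.le a (sup a b)
  le_sup_right : ∀ a b, toEffectAlgebra.le b (sup a b)
  sup_le : ∀ a b c, toEffectAlgebra.le a c → toEffectAlgebra.le b c →
    toEffectAlgebra.le (sup a b) c

/-- The total operation `x·y := ((x'∧y)⊕y')'` on a lattice effect algebra
(well defined since `x'∧y ≤ y`). -/
def LatticeEffectAlgebra.prod {E : Type*} (A : LatticeEffectAlgebra E) (x y : E) : E :=
  A.compl (A.add (A.inf (A.compl x) y) (A.compl y))

/-!
Under complementation (NG8) is the associativity law (E2). The product `x·y` vanishes exactly when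
`x ⊕ y` is defined, and whenever `x' ⊕ y'` is defined it is the De Morgan dual `(x' ⊕ y')'`. Hence
the two hypotheses say that `(a' ⊕ b') ⊕ c'` is defined, and (E2) for `a'`, `b'`, `c'` yields all
three conclusions.
-/

namespace EffectAlgebra

variable {E : Type*} {A : EffectAlgebra E} {m : E → E → E} {x y z : E}

theorem D.symm (h : A.D x y) : A.D y x := (A.E1 x y h).1

protected theorem add_comm (h : A.D x y) : A.add x y = A.add y x := (A.E1 x y h).2

protected theorem compl_compl (A : EffectAlgebra E) (x : E) : A.compl (A.compl x) = x :=
  (A.E3c _ _ (A.E3a x).symm ((A.add_comm (A.E3a x)).symm.trans (A.E3b x))).symm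

theorem compl_one (A : EffectAlgebra E) : A.compl A.one = A.zero := A.E4 _ (A.E3a A.one).symm

theorem compl_zero (A : EffectAlgebra E) : A.compl A.zero = A.one := by
  rw [← A.compl_one, A.compl_compl]

theorem D_compl_add (h : A.D x y) : A.D x (A.compl (A.add x y)) := by
  rw [A.add_comm h]
  exact (A.E2 y x _ h.symm (A.E3a _)).1

theorem add_compl_add (h : A.D x y) : A.add x (A.compl (A.add x y)) = A.compl y := by
  rw [A.add_comm h]
  obtain ⟨-, hD, hassoc⟩ := A.E2 y x _ h.symm (A.E3a _)
  exact A.E3c _ _ hD (hassoc.symm.trans (A.E3b _))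

protected theorem add_left_cancel (hy : A.D x y) (hz : A.D x z) (h : A.add x y = A.add x z) :
    y = z := by
  rw [← A.compl_compl y, ← add_compl_add hy, h, add_compl_add hz, A.compl_compl]

theorem D_zero (A : EffectAlgebra E) (x : E) : A.D x A.zero := by
  simpa only [A.E3b, A.compl_one] using D_compl_add (A.E3a x)

protected theorem add_zero (A : EffectAlgebra E) (x : E) : A.add x A.zero = x := by
  simpa only [A.E3b, A.compl_one, A.compl_compl] using add_compl_add (A.E3a x)

theorem right_eq_zero_of_add_eq_zero (h : A.D x y) (hxy : A.add x y = A.zero) : y = A.zero := by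
  have hD : A.D (A.add x y) A.one := hxy ▸ (A.D_zero A.one).symm
  exact A.E4 y (A.E2 x y A.one h hD).1

protected theorem le_refl (A : EffectAlgebra E) (x : E) : A.le x x :=
  ⟨A.zero, A.D_zero x, A.add_zero x⟩

protected theorem le_antisymm (hxy : A.le x y) (hyx : A.le y x) : x = y := by
  obtain ⟨c, hxc, rfl⟩ := hxy
  obtain ⟨d, hd, hx⟩ := hyx
  obtain ⟨hcd, hxcd, hassoc⟩ := A.E2 x c d hxc hd
  have hcd_zero : A.add c d = A.zero :=
    A.add_left_cancel hxcd (A.D_zero x) (by rw [← hassoc, hx, A.add_zero])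
  rw [right_eq_zero_of_add_eq_zero hcd hcd_zero, A.add_zero] at hx
  exact hx.symm

theorem D_iff_le_compl : A.D x y ↔ A.le x (A.compl y) := by
  refine ⟨fun h ↦ ⟨_, D_compl_add h, add_compl_add h⟩, ?_⟩
  rintro ⟨c, hxc, hy⟩
  have hD : A.D (A.add c x) y := by
    rw [← A.add_comm hxc, hy]
    exact (A.E3a y).symm
  exact (A.E2 c x y hxc.symm hD).1

/-- `m` is a directoid operation for the induced order: it selects a lower bound of every pair, the
smaller element if the pair is comparable. It need not be commutative or a greatest lower bound, and
since `0` is a least element every effect algebra has one. -/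
structure IsDirectoidMeet (A : EffectAlgebra E) (m : E → E → E) : Prop where
  le_left : ∀ x y, A.le (m x y) x
  le_right : ∀ x y, A.le (m x y) y
  eq_left : ∀ {x y}, A.le x y → m x y = x
  eq_right : ∀ {x y}, A.le y x → m x y = y

/-- The product `x·y := (m x' y ⊕ y')'` induced by a binary operation `m` in the role of the meet.
The sum is defined as soon as `m x' y ≤ y`. -/
def directoidProd (A : EffectAlgebra E) (m : E → E → E) (x y : E) : E :=
  A.compl (A.add (m (A.compl x) y) (A.compl y))

namespace IsDirectoidMeet

theorem D_compl (hm : A.IsDirectoidMeet m) (x y : E) : A.D (m x y) (A.compl y) := by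
  rw [D_iff_le_compl, A.compl_compl]
  exact hm.le_right x y

theorem directoidProd_eq_zero_iff (hm : A.IsDirectoidMeet m) :
    A.directoidProd m x y = A.zero ↔ A.D x y := by
  constructor
  · intro h
    have hD := hm.D_compl (A.compl x) y
    have hsum : A.add (m (A.compl x) y) (A.compl y) = A.one := by
      rw [← A.compl_zero, ← h, directoidProd, A.compl_compl]
    have hmeet : m (A.compl x) y = y := by
      rw [← A.compl_compl (m _ _), ← A.E3c _ _ hD hsum, A.compl_compl]
    have hle : A.le y (A.compl x) := hmeet ▸ hm.le_left (A.compl x) y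
    exact (D_iff_le_compl.2 hle).symm
  · intro h
    rw [directoidProd, hm.eq_right (D_iff_le_compl.1 h.symm), A.E3b, A.compl_one]

theorem compl_directoidProd (hm : A.IsDirectoidMeet m) (h : A.D (A.compl x) (A.compl y)) :
    A.compl (A.directoidProd m x y) = A.add (A.compl x) (A.compl y) := by
  rw [D_iff_le_compl, A.compl_compl] at h
  rw [directoidProd, A.compl_compl, hm.eq_left h]

end IsDirectoidMeet

end EffectAlgebra

theorem LatticeEffectAlgebra.isDirectoidMeet_inf {E : Type*} (A : LatticeEffectAlgebra E) :
    A.IsDirectoidMeet A.inf where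
  le_left := A.inf_le_left
  le_right := A.inf_le_right
  eq_left h := A.le_antisymm (A.inf_le_left _ _) (A.le_inf _ _ _ (A.le_refl _) h)
  eq_right h := A.le_antisymm (A.inf_le_right _ _) (A.le_inf _ _ _ h (A.le_refl _))

theorem ng8_holds_general {E : Type*} {A : EffectAlgebra E} {m : E → E → E}
    (hm : A.IsDirectoidMeet m) {a b c : E}
    (h1 : A.directoidProd m (A.compl a) (A.compl b) = A.zero)
    (h2 : A.directoidProd m (A.compl (A.directoidProd m a b)) (A.compl c) = A.zero) :
    A.directoidProd m (A.compl b) (A.compl c) = A.zero ∧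
    A.directoidProd m (A.compl a) (A.compl (A.directoidProd m b c)) = A.zero ∧
    A.directoidProd m (A.directoidProd m a b) c = A.directoidProd m a (A.directoidProd m b c) := by
  rw [hm.directoidProd_eq_zero_iff] at h1 h2
  have hab := hm.compl_directoidProd h1
  obtain ⟨hD_bc, hD_abc, hassoc⟩ := A.E2 _ _ _ h1 (hab ▸ h2)
  have hbc := hm.compl_directoidProd hD_bc
  rw [← hbc] at hD_abc
  refine ⟨hm.directoidProd_eq_zero_iff.2 hD_bc, hm.directoidProd_eq_zero_iff.2 hD_abc, ?_⟩
  have hcompl : A.compl (A.directoidProd m (A.directoidProd m a b) c) =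
      A.compl (A.directoidProd m a (A.directoidProd m b c)) := by
    rw [hm.compl_directoidProd h2, hm.compl_directoidProd hD_abc, hab, hbc, hassoc]
  simpa only [A.compl_compl] using congrArg A.compl hcompl

/-- (NG8) holds in `(E;·,',0,1)` for a lattice effect algebra `E` with
`x·y := ((x'∧y)⊕y')'`: if `a'·b' = 0` and `(a·b)'·c' = 0` then `b'·c' = 0`,
`a'·(b·c)' = 0` and `(a·b)·c = a·(b·c)`. -/
theorem ng8_holds {E : Type*} (A : LatticeEffectAlgebra E) (a b c : E)
    (h1 : A.prod (A.compl a) (A.compl b) = A.zero)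
    (h2 : A.prod (A.compl (A.prod a b)) (A.compl c) = A.zero) :
    A.prod (A.compl b) (A.compl c) = A.zero ∧
    A.prod (A.compl a) (A.compl (A.prod b c)) = A.zero ∧
    A.prod (A.prod a b) c = A.prod a (A.prod b c) :=
  ng8_holds_general A.isDirectoidMeet_inf h1 h2
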